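/- Fix reals a < b and let M′[a,b] = {μ ∈ M[a,b] : R_μ(u) > −1 for all real u < a}. Then the relation R_ψ(u) = R_μ(u) for all u ∈ ℂ∖[a,b] defines a bijective correspondence between M̃[a,b] and M′[a,b]: for every ψ ∈ M̃[a,b] there exists exactly one μ ∈ M′[a,b] such that ∫_{[a,b]} μ(dt)/(u−t) = −1 + exp(∫_{[a,b]} ψ(dt)/(u−t)) for all u ∈ ℂ∖[a,b], and for every μ ∈ M′[a,b] there exists exactly one ψ ∈ M̃[a,b] (up to equality of measures) satisfying this identity. -/

import Mathlib

open Filter Topology MeasureTheory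
open scoped BigOperators

/-- `ψ ∈ M̃[a,b]`: a Borel probability measure on `ℝ` supported in `[a,b]`, absolutely
continuous with respect to Lebesgue measure with density bounded by `1` a.e. -/
def MemMTilde (a b : ℝ) (ψ : Measure ℝ) : Prop :=
  IsProbabilityMeasure ψ ∧ ψ (Set.Icc a b) = 1 ∧ ψ ≪ volume ∧
    ∀ᵐ t ∂volume, ψ.rnDeriv volume t ≤ 1

/-- `μ ∈ M[a,b]`: a Borel probability measure on `ℝ` supported in `[a,b]`. -/
def MemM (a b : ℝ) (μ : Measure ℝ) : Prop :=
  IsProbabilityMeasure μ ∧ μ (Set.Icc a b) = 1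

/-- `μ ∈ M′[a,b]`: additionally `R_μ(u) > -1` for all real `u < a`. -/
def MemMPrime (a b : ℝ) (μ : Measure ℝ) : Prop :=
  MemM a b μ ∧ ∀ u : ℝ, u < a → -1 < ∫ t, (u - t)⁻¹ ∂μ

/-- The correspondence identity `∫ μ(dt)/(u-t) = -1 + exp(∫ ψ(dt)/(u-t))` on `ℂ ∖ [a,b]`. -/
def CorrId (a b : ℝ) (ψ μ : Measure ℝ) : Prop :=
  ∀ u : ℂ, u ∉ (fun t : ℝ => (t : ℂ)) '' Set.Icc a b →
    (∫ t, (u - (t : ℂ))⁻¹ ∂μ) = -1 + Complex.exp (∫ t, (u - (t : ℂ))⁻¹ ∂ψ)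

/-!
If `μ = ∑ s ∈ S, w s • δ_s` is finitely atomic with positive weights, then `1 + R_μ` is a rational
function with poles in `S`. It runs from `+∞` to `-∞` between consecutive poles and is positive to
the left of `a`, so it has a zero `α s` to the left of each pole `s`, and these zeros interlace with
the poles. Hence `1 + R_μ(u) = ∏ s ∈ S, (u - α s) / (u - s)`, which is the exponential of the Cauchy
transform of Lebesgue measure restricted to the disjoint union of the intervals `(α s, s]`.
Conversely, for interlacing `α s` and `s` the partial fraction expansion of the product has
nonnegative residues. The correspondence thus holds between finitely atomic measures and Lebesgue
measure on finite unions of intervals. Any `ψ ≤ volume`, and likewise any `μ`, is a weak limit of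
such measures, obtained by rearranging its mass within the cells of ever finer grids; rounding the
mass of `μ` to the right only increases `R_μ` on `(-∞, a)`, so it preserves `R_μ > -1` there.
Existence follows by weak compactness of `M[a,b]`, since the correspondence and the bound
`ψ ≤ volume` pass to weak limits. Both members are unique because the expansion of the Cauchy
transform at infinity determines all moments, and total masses agree because
`exp x - 1 ~ x` at `0`.
-/

open scoped NNReal

section CauchyTransform

variable {u : ℂ} {s : Set ℝ}

/-- The Cauchy transform `u ↦ ∫ μ(dt) / (u - t)`, written `R_μ` in the statement for `μ ∈ M[a,b]`.
The sign convention is opposite to that of the resolvent `(t - u)⁻¹`. -/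
noncomputable def cauchyTransform (μ : Measure ℝ) (u : ℂ) : ℂ :=
  ∫ t, (u - (t : ℂ))⁻¹ ∂μ

theorem sub_ofReal_ne_zero (hu : u ∉ Complex.ofReal '' s) {t : ℝ} (ht : t ∈ s) :
    u - (t : ℂ) ≠ 0 :=
  fun h => hu ⟨t, ht, (sub_eq_zero.1 h).symm⟩

theorem continuousOn_inv_sub_ofReal (hu : u ∉ Complex.ofReal '' s) :
    ContinuousOn (fun t : ℝ => (u - (t : ℂ))⁻¹) s :=
  ContinuousOn.inv₀ (by fun_prop) fun _ ht => sub_ofReal_ne_zero hu ht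

theorem ofReal_notMem_image_ofReal_iff {x : ℝ} : (x : ℂ) ∉ Complex.ofReal '' s ↔ x ∉ s := by
  rw [Complex.ofReal_injective.mem_set_image]

theorem cauchyTransform_ofReal (μ : Measure ℝ) (x : ℝ) :
    cauchyTransform μ x = ((∫ t, (x - t)⁻¹ ∂μ : ℝ) : ℂ) := by
  simp only [cauchyTransform, ← integral_complex_ofReal, Complex.ofReal_inv, Complex.ofReal_sub]

theorem integrable_of_continuousOn_of_ae_mem {X E : Type*} [TopologicalSpace X] [T2Space X]
    [MeasurableSpace X] [OpensMeasurableSpace X] [NormedAddCommGroup E]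
    {μ : Measure X} [IsFiniteMeasureOnCompacts μ] {K : Set X} {f : X → E} (hK : IsCompact K)
    (hμ : ∀ᵐ x ∂μ, x ∈ K) (hf : ContinuousOn f K) :
    Integrable f μ := by
  have h := hf.integrableOn_compact hK (μ := μ)
  rwa [IntegrableOn, Measure.restrict_eq_self_of_ae_mem hμ] at h

end CauchyTransform

section Asymptotics

variable {a b : ℝ} {μ ψ : Measure ℝ}

theorem tendsto_mul_inv_sub_atTop (t : ℝ) :
    Tendsto (fun u : ℝ => u * (u - t)⁻¹) atTop (𝓝 1) := by
  have hinv : Tendsto (fun u : ℝ => (u - t)⁻¹) atTop (𝓝 0) :=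
    tendsto_inv_atTop_zero.comp (tendsto_atTop_add_const_right _ (-t) tendsto_id)
  have hadd : Tendsto (fun u : ℝ => 1 + t * (u - t)⁻¹) atTop (𝓝 1) := by
    simpa only [mul_zero, add_zero] using (hinv.const_mul t).const_add 1
  refine hadd.congr' ?_
  filter_upwards [eventually_gt_atTop t] with u hu
  field_simp [sub_ne_zero.2 hu.ne']
  ring

theorem tendsto_mul_integral_mul_inv_sub {g : ℝ → ℝ} (hμ : ∀ᵐ t ∂μ, t ≤ b)
    (hg : Integrable g μ) :
    Tendsto (fun u : ℝ => u * ∫ t, g t * (u - t)⁻¹ ∂μ) atTop (𝓝 (∫ t, g t ∂μ)) := by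
  simp_rw [← integral_const_mul]
  refine tendsto_integral_filter_of_dominated_convergence (fun t => 2 * |g t|)
    (.of_forall fun u => ?_) ?_ (hg.abs.const_mul 2) (.of_forall fun t => ?_)
  · exact (hg.1.mul (by fun_prop : Measurable fun t => (u - t)⁻¹).aestronglyMeasurable).const_mul u
  · filter_upwards [eventually_gt_atTop (2 * b), eventually_gt_atTop 0] with u hub hu
    filter_upwards [hμ] with t ht
    have hut : 0 < u - t := by linarith
    have hle : u * (u - t)⁻¹ ≤ 2 := by
      rw [← div_eq_mul_inv, div_le_iff₀ hut]
      linarith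
    rw [mul_left_comm, norm_mul, Real.norm_eq_abs, Real.norm_of_nonneg (by positivity), mul_comm]
    exact mul_le_mul_of_nonneg_right hle (abs_nonneg _)
  · simpa only [mul_left_comm, mul_one] using (tendsto_mul_inv_sub_atTop t).const_mul (g t)

theorem tendsto_mul_integral_inv_sub [IsFiniteMeasure μ] (hμ : ∀ᵐ t ∂μ, t ≤ b) :
    Tendsto (fun u : ℝ => u * ∫ t, (u - t)⁻¹ ∂μ) atTop (𝓝 (μ.real Set.univ)) := by
  simpa only [one_mul, integral_const, smul_eq_mul, mul_one] using
    tendsto_mul_integral_mul_inv_sub hμ (integrable_const (1 : ℝ))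

theorem CorrId.integral_eq (h : CorrId a b ψ μ) {x : ℝ} (hx : x ∉ Set.Icc a b) :
    ∫ t, (x - t)⁻¹ ∂μ = -1 + Real.exp (∫ t, (x - t)⁻¹ ∂ψ) := by
  have hc : cauchyTransform μ x = -1 + Complex.exp (cauchyTransform ψ x) :=
    h x (ofReal_notMem_image_ofReal_iff.2 hx)
  rw [cauchyTransform_ofReal, cauchyTransform_ofReal] at hc
  exact_mod_cast hc

theorem CorrId.measureReal_univ_eq [IsFiniteMeasure μ] [IsFiniteMeasure ψ]
    (hψ : ∀ᵐ t ∂ψ, t ∈ Set.Icc a b) (hμ : ∀ᵐ t ∂μ, t ∈ Set.Icc a b) (h : CorrId a b ψ μ) :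
    μ.real Set.univ = ψ.real Set.univ := by
  have hlimμ := tendsto_mul_integral_inv_sub (hμ.mono fun _ ht => ht.2)
  have hlimψ := tendsto_mul_integral_inv_sub (hψ.mono fun _ ht => ht.2)
  have hzero : Tendsto (fun u : ℝ => ∫ t, (u - t)⁻¹ ∂ψ) atTop (𝓝 0) := by
    have hdiv := tendsto_inv_atTop_zero.mul hlimψ
    rw [zero_mul] at hdiv
    refine hdiv.congr' ?_
    filter_upwards [eventually_ne_atTop 0] with u hu using inv_mul_cancel_left₀ hu _
  have hslope : Tendsto (fun u : ℝ => dslope Real.exp 0 (∫ t, (u - t)⁻¹ ∂ψ)) atTop (𝓝 1) := by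
    have hc : ContinuousAt (dslope Real.exp 0) 0 :=
      continuousAt_dslope_same.2 Real.differentiableAt_exp
    simpa only [dslope_same, Real.deriv_exp, Real.exp_zero, Function.comp_def] using
      hc.tendsto.comp hzero
  refine tendsto_nhds_unique hlimμ ?_
  rw [← mul_one (ψ.real Set.univ)]
  refine (hlimψ.mul hslope).congr' ?_
  filter_upwards [eventually_gt_atTop b] with u hu
  have hexp := sub_smul_dslope Real.exp 0 (∫ t, (u - t)⁻¹ ∂ψ)
  rw [sub_zero, smul_eq_mul, Real.exp_zero] at hexp
  rw [mul_assoc, hexp, h.integral_eq fun hm => hu.not_ge hm.2]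
  ring

end Asymptotics

section Uniqueness

variable {a b : ℝ} {μ ν : Measure ℝ}

theorem norm_integral_sub_integral_le {X E : Type*} [MeasurableSpace X] [NormedAddCommGroup E]
    [NormedSpace ℝ E] {μ : Measure X} [IsFiniteMeasure μ] {f g : X → E} {C : ℝ}
    (hf : Integrable f μ) (hg : Integrable g μ) (h : ∀ᵐ x ∂μ, ‖f x - g x‖ ≤ C) :
    ‖(∫ x, f x ∂μ) - ∫ x, g x ∂μ‖ ≤ C * μ.real Set.univ := by
  rw [← integral_sub hf hg]
  exact norm_integral_le_of_norm_le_const h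

theorem integral_eval_eq_of_integral_pow_eq {μ ν : Measure ℝ} (hμ : ∀ k : ℕ, Integrable (· ^ k) μ)
    (hν : ∀ k : ℕ, Integrable (· ^ k) ν) (h : ∀ k : ℕ, ∫ t, t ^ k ∂μ = ∫ t, t ^ k ∂ν)
    (p : Polynomial ℝ) : ∫ t, p.eval t ∂μ = ∫ t, p.eval t ∂ν := by
  simp_rw [Polynomial.eval_eq_sum_range]
  rw [integral_finsetSum _ fun k _ => (hμ k).const_mul _,
    integral_finsetSum _ fun k _ => (hν k).const_mul _]
  simp_rw [integral_const_mul, h]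

theorem measure_eq_of_integral_pow_eq [IsFiniteMeasure μ] [IsFiniteMeasure ν]
    (hμ : ∀ᵐ t ∂μ, t ∈ Set.Icc a b) (hν : ∀ᵐ t ∂ν, t ∈ Set.Icc a b)
    (h : ∀ k : ℕ, ∫ t, t ^ k ∂μ = ∫ t, t ^ k ∂ν) : μ = ν := by
  have hint {g : ℝ → ℝ} (hg : Continuous g) : Integrable g μ ∧ Integrable g ν :=
    ⟨integrable_of_continuousOn_of_ae_mem isCompact_Icc hμ hg.continuousOn,
      integrable_of_continuousOn_of_ae_mem isCompact_Icc hν hg.continuousOn⟩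
  have hpoly := integral_eval_eq_of_integral_pow_eq (fun k => (hint (continuous_pow k)).1)
    (fun k => (hint (continuous_pow k)).2) h
  refine ext_of_forall_integral_eq_of_IsFiniteMeasure fun f => eq_of_forall_dist_le fun δ hδ => ?_
  have hM : 0 < μ.real Set.univ + ν.real Set.univ + 1 := by positivity
  set ε := δ / (μ.real Set.univ + ν.real Set.univ + 1)
  have hε : 0 < ε := by positivity
  obtain ⟨p, hp⟩ := exists_polynomial_near_of_continuousOn a b f f.continuous.continuousOn ε hε
  have hle : ∀ t ∈ Set.Icc a b, ‖f t - p.eval t‖ ≤ ε := fun t ht => by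
    rw [norm_sub_rev]
    exact (hp t ht).le
  calc dist (∫ t, f t ∂μ) (∫ t, f t ∂ν)
      ≤ dist (∫ t, f t ∂μ) (∫ t, p.eval t ∂μ) + dist (∫ t, f t ∂ν) (∫ t, p.eval t ∂ν) := by
        rw [hpoly p]
        exact dist_triangle_right _ _ _
    _ ≤ ε * μ.real Set.univ + ε * ν.real Set.univ := by
        rw [dist_eq_norm, dist_eq_norm]
        exact add_le_add
          (norm_integral_sub_integral_le (hint f.continuous).1 (hint p.continuous).1 (hμ.mono hle))
          (norm_integral_sub_integral_le (hint f.continuous).2 (hint p.continuous).2 (hν.mono hle))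
    _ ≤ ε * (μ.real Set.univ + ν.real Set.univ + 1) := by linarith
    _ = δ := div_mul_cancel₀ δ hM.ne'

theorem integral_mul_self_mul_inv_sub [IsFiniteMeasure μ] (hμ : ∀ᵐ t ∂μ, t ∈ Set.Icc a b)
    {g : ℝ → ℝ} (hg : ContinuousOn g (Set.Icc a b)) {u : ℝ} (hu : b < u) :
    ∫ t, g t * t * (u - t)⁻¹ ∂μ = u * ∫ t, g t * (u - t)⁻¹ ∂μ - ∫ t, g t ∂μ := by
  have hne : ∀ t ∈ Set.Icc a b, u - t ≠ 0 := fun t ht => (sub_pos.2 (ht.2.trans_lt hu)).ne'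
  have hcont : ContinuousOn (fun t => g t * (u - t)⁻¹) (Set.Icc a b) :=
    hg.mul (ContinuousOn.inv₀ (by fun_prop) hne)
  rw [← integral_const_mul, ← integral_sub
    ((integrable_of_continuousOn_of_ae_mem isCompact_Icc hμ hcont).const_mul u)
    (integrable_of_continuousOn_of_ae_mem isCompact_Icc hμ hg)]
  refine integral_congr_ae (hμ.mono fun t ht => ?_)
  have := hne t ht
  field_simp
  ring

theorem measure_eq_of_integral_inv_sub_eq [IsFiniteMeasure μ] [IsFiniteMeasure ν]
    (hμ : ∀ᵐ t ∂μ, t ∈ Set.Icc a b) (hν : ∀ᵐ t ∂ν, t ∈ Set.Icc a b)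
    (h : ∀ u : ℝ, b < u → ∫ t, (u - t)⁻¹ ∂μ = ∫ t, (u - t)⁻¹ ∂ν) : μ = ν := by
  have hlim (k : ℕ)
      (hk : ∀ u : ℝ, b < u → ∫ t, t ^ k * (u - t)⁻¹ ∂μ = ∫ t, t ^ k * (u - t)⁻¹ ∂ν) :
      ∫ t, t ^ k ∂μ = ∫ t, t ^ k ∂ν := by
    have htendsto {ρ : Measure ℝ} [IsFiniteMeasure ρ] (hρ : ∀ᵐ t ∂ρ, t ∈ Set.Icc a b) :=
      tendsto_mul_integral_mul_inv_sub (hρ.mono fun _ ht => ht.2)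
        (integrable_of_continuousOn_of_ae_mem isCompact_Icc hρ (continuous_pow k).continuousOn)
    refine tendsto_nhds_unique (htendsto hμ) ((htendsto hν).congr' ?_)
    filter_upwards [eventually_gt_atTop b] with u hu
    rw [hk u hu]
  suffices hpow : ∀ (k : ℕ) (u : ℝ), b < u →
      ∫ t, t ^ k * (u - t)⁻¹ ∂μ = ∫ t, t ^ k * (u - t)⁻¹ ∂ν from
    measure_eq_of_integral_pow_eq hμ hν fun k => hlim k (hpow k)
  intro k
  induction k with
  | zero => simpa only [pow_zero, one_mul] using h
  | succ k ih =>
    intro u hu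
    simp_rw [pow_succ]
    rw [integral_mul_self_mul_inv_sub hμ (by fun_prop) hu,
      integral_mul_self_mul_inv_sub hν (by fun_prop) hu, ih u hu, hlim k ih]

end Uniqueness

section Membership

variable {a b : ℝ} {ψ ψ' μ μ' : Measure ℝ}

theorem memM_iff_ae_mem_Icc :
    MemM a b μ ↔ IsProbabilityMeasure μ ∧ ∀ᵐ t ∂μ, t ∈ Set.Icc a b :=
  and_congr_right fun _ => (prob_compl_eq_zero_iff measurableSet_Icc).symm

theorem memMTilde_iff_le_volume : MemMTilde a b ψ ↔ MemM a b ψ ∧ ψ ≤ volume := by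
  rw [MemMTilde, MemM, ← and_assoc]
  refine and_congr_right fun ⟨_, _⟩ => ⟨fun ⟨hac, hle⟩ => ?_, fun hle => ⟨?_, ?_⟩⟩
  · exact (Measure.rnDeriv_le_one_iff_le hac).1 hle
  · exact Measure.absolutelyContinuous_of_le hle
  · exact Measure.rnDeriv_le_one_of_le hle

theorem MemM.ae_mem_Icc (hμ : MemM a b μ) : ∀ᵐ t ∂μ, t ∈ Set.Icc a b :=
  (memM_iff_ae_mem_Icc.1 hμ).2

theorem MemM.left_le_right (hμ : MemM a b μ) : a ≤ b :=
  Set.nonempty_Icc.1 (nonempty_of_measure_ne_zero (hμ.2.trans_ne one_ne_zero))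

theorem CorrId.memM_iff_memM [IsFiniteMeasure ψ] [IsFiniteMeasure μ]
    (hψ : ∀ᵐ t ∂ψ, t ∈ Set.Icc a b) (hμ : ∀ᵐ t ∂μ, t ∈ Set.Icc a b) (h : CorrId a b ψ μ) :
    MemM a b ψ ↔ MemM a b μ := by
  rw [memM_iff_ae_mem_Icc, memM_iff_ae_mem_Icc, isProbabilityMeasure_iff_real,
    isProbabilityMeasure_iff_real, h.measureReal_univ_eq hψ hμ, and_iff_left hψ, and_iff_left hμ]

theorem CorrId.left_unique (hψ : MemM a b ψ) (hψ' : MemM a b ψ') (h : CorrId a b ψ μ)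
    (h' : CorrId a b ψ' μ) : ψ' = ψ := by
  have := hψ.1
  have := hψ'.1
  refine measure_eq_of_integral_inv_sub_eq hψ'.ae_mem_Icc hψ.ae_mem_Icc fun u hu => ?_
  have hub : u ∉ Set.Icc a b := fun hm => hu.not_ge hm.2
  exact Real.exp_injective (add_left_cancel ((h'.integral_eq hub).symm.trans (h.integral_eq hub)))

theorem CorrId.right_unique (hμ : MemM a b μ) (hμ' : MemM a b μ') (h : CorrId a b ψ μ)
    (h' : CorrId a b ψ μ') : μ' = μ := by
  have := hμ.1
  have := hμ'.1
  refine measure_eq_of_integral_inv_sub_eq hμ'.ae_mem_Icc hμ.ae_mem_Icc fun u hu => ?_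
  have hub : u ∉ Set.Icc a b := fun hm => hu.not_ge hm.2
  exact (h'.integral_eq hub).trans (h.integral_eq hub).symm

theorem CorrId.memMPrime (hμ : MemM a b μ) (h : CorrId a b ψ μ) : MemMPrime a b μ := by
  refine ⟨hμ, fun u hu => ?_⟩
  rw [h.integral_eq fun hm => hu.not_ge hm.1]
  exact lt_add_of_pos_right _ (Real.exp_pos _)

end Membership

section WeakLimits

theorem isCompact_setOf_probabilityMeasure_ae_mem {X : Type*} [TopologicalSpace X] [T2Space X]
    [MeasurableSpace X] [BorelSpace X] {K : Set X} (hK : IsCompact K) :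
    IsCompact {P : ProbabilityMeasure X | ∀ᵐ x ∂(P : Measure X), x ∈ K} := by
  convert isCompact_setOfPred_probabilityMeasure_mass_eq_compl_isCompact_le (u := fun _ => 0)
    (K := fun _ => K) tendsto_const_nhds (fun _ => hK) (Or.inr monotone_const) using 3 with P
  rw [forall_const, nonpos_iff_eq_zero, ProbabilityMeasure.null_iff_toMeasure_null]
  exact mem_ae_iff

variable {ι : Type*} {F : Filter ι}

theorem tendsto_integral_of_continuousOn {X 𝕜 : Type*} [TopologicalSpace X] [T4Space X]
    [MeasurableSpace X] [OpensMeasurableSpace X] [RCLike 𝕜] {K : Set X} (hK : IsCompact K)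
    {P : ι → ProbabilityMeasure X} {Q : ProbabilityMeasure X}
    (hP : ∀ i, ∀ᵐ x ∂(P i : Measure X), x ∈ K) (hQ : ∀ᵐ x ∂(Q : Measure X), x ∈ K)
    (h : Tendsto P F (𝓝 Q)) {f : X → 𝕜} (hf : ContinuousOn f K) :
    Tendsto (fun i => ∫ x, f x ∂(P i : Measure X)) F (𝓝 (∫ x, f x ∂(Q : Measure X))) := by
  have : CompactSpace K := isCompact_iff_compactSpace.1 hK
  obtain ⟨g, -, hg⟩ := (BoundedContinuousFunction.mkOfCompact
    ⟨K.domRestrict f, hf.domRestrict⟩).exists_norm_eq_domRestrict_eq (𝕜 := 𝕜) hK.isClosed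
  have hfg : ∀ x ∈ K, g x = f x := fun x hx => DFunLike.congr_fun hg ⟨x, hx⟩
  rw [← integral_congr_ae (hQ.mono hfg)]
  simp_rw [← integral_congr_ae ((hP _).mono hfg)]
  exact (ProbabilityMeasure.tendsto_iff_forall_integral_rclike_tendsto 𝕜).1 h g

theorem measure_le_of_tendsto {X : Type*} [TopologicalSpace X] [HasOuterApproxClosed X]
    [MeasurableSpace X] [OpensMeasurableSpace X] [F.NeBot] {P : ι → ProbabilityMeasure X}
    {Q : ProbabilityMeasure X} {ν : Measure X} [ν.OuterRegular] (hP : ∀ i, (P i : Measure X) ≤ ν)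
    (h : Tendsto P F (𝓝 Q)) : (Q : Measure X) ≤ ν := by
  refine Measure.le_intro fun s _ _ => ?_
  rw [s.measure_eq_iInf_isOpen ν]
  refine le_iInf₂ fun U hsU => le_iInf fun hU => ?_
  calc (Q : Measure X) s ≤ (Q : Measure X) U := measure_mono hsU
    _ ≤ F.liminf fun i => (P i : Measure X) U :=
      ProbabilityMeasure.le_liminf_measure_open_of_tendsto h hU
    _ ≤ ν U := liminf_le_of_le (by isBoundedDefault) fun c hc =>
      (hc.exists.elim fun i hi => hi.trans (hP i U))

variable {a b : ℝ} {ψ μ : Measure ℝ}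

/-- A measure in `M[a,b]` as a point of the space of probability measures with its weak topology. -/
def MemM.toProbabilityMeasure (hμ : MemM a b μ) : ProbabilityMeasure ℝ :=
  ⟨μ, hμ.1⟩

theorem MemM.exists_tendsto_subseq {P : ℕ → Measure ℝ} (hP : ∀ n, MemM a b (P n)) :
    ∃ (μ : Measure ℝ) (hμ : MemM a b μ) (φ : ℕ → ℕ), StrictMono φ ∧
      Tendsto (fun n => (hP (φ n)).toProbabilityMeasure) atTop (𝓝 hμ.toProbabilityMeasure) := by
  obtain ⟨μ, hμ, φ, hφ, hlim⟩ :=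
    (isCompact_setOf_probabilityMeasure_ae_mem isCompact_Icc).tendsto_subseq
      (x := fun n => (hP n).toProbabilityMeasure) fun n => (hP n).ae_mem_Icc
  exact ⟨μ, memM_iff_ae_mem_Icc.2 ⟨inferInstance, hμ⟩, φ, hφ, hlim⟩

theorem CorrId.of_tendsto [F.NeBot] {P Q : ι → Measure ℝ} (hP : ∀ i, MemM a b (P i))
    (hQ : ∀ i, MemM a b (Q i)) (hψ : MemM a b ψ) (hμ : MemM a b μ)
    (hPψ : Tendsto (fun i => (hP i).toProbabilityMeasure) F (𝓝 hψ.toProbabilityMeasure))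
    (hQμ : Tendsto (fun i => (hQ i).toProbabilityMeasure) F (𝓝 hμ.toProbabilityMeasure))
    (h : ∀ i, CorrId a b (P i) (Q i)) : CorrId a b ψ μ := by
  intro u hu
  have hcont := continuousOn_inv_sub_ofReal hu
  have hlimP := tendsto_integral_of_continuousOn isCompact_Icc (fun i => (hP i).ae_mem_Icc)
    hψ.ae_mem_Icc hPψ hcont
  have hlimQ := tendsto_integral_of_continuousOn isCompact_Icc (fun i => (hQ i).ae_mem_Icc)
    hμ.ae_mem_Icc hQμ hcont
  exact tendsto_nhds_unique (hlimQ.congr fun i => h i u hu) (hlimP.cexp.const_add (-1))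

end WeakLimits

section PartialFractions

variable {ι K : Type*} [Field K] {S : Finset ι} {v z w : ι → K} {u : K}

theorem one_add_sum_mul_inv_sub {x : K} (hu : ∀ j ∈ S, u ≠ v j) (hx : ∀ j ∈ S, x ≠ v j)
    (hux : u ≠ x) (hzero : 1 + ∑ j ∈ S, w j * (x - v j)⁻¹ = 0) :
    (1 + ∑ j ∈ S, w j * (u - v j)⁻¹) * (u - x)⁻¹ =
      -∑ j ∈ S, w j * (u - v j)⁻¹ * (x - v j)⁻¹ := by
  rw [← sub_zero (1 + _), ← hzero, add_sub_add_left_eq_sub, ← Finset.sum_sub_distrib,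
    Finset.sum_mul, ← Finset.sum_neg_distrib]
  refine Finset.sum_congr rfl fun j hj => ?_
  have := sub_ne_zero.2 (hu j hj)
  have := sub_ne_zero.2 (hx j hj)
  have := sub_ne_zero.2 hux
  field_simp
  ring

theorem prod_sub_div_sub_eq_one_add_sum [DecidableEq ι] (hv : Set.InjOn v S)
    (hu : ∀ i ∈ S, u ≠ v i) :
    ∏ i ∈ S, (u - z i) / (u - v i) =
      1 + ∑ i ∈ S, (v i - z i) * (∏ j ∈ S.erase i, (v i - z j) / (v i - v j)) * (u - v i)⁻¹ := by
  have hdeg : (Lagrange.nodal S z - Lagrange.nodal S v).degree < S.card := by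
    rw [← Lagrange.degree_nodal (s := S) (v := z)]
    refine Polynomial.degree_sub_lt_left (by rw [Lagrange.degree_nodal, Lagrange.degree_nodal])
      Lagrange.nodal_ne_zero ?_
    rw [Lagrange.nodal_monic.leadingCoeff, Lagrange.nodal_monic.leadingCoeff]
  have heval := congrArg (Polynomial.eval u) (Lagrange.eq_interpolate hv hdeg)
  rw [Lagrange.eval_interpolate_not_at_node _ hu, Polynomial.eval_sub, sub_eq_iff_eq_add'] at heval
  have hne : Polynomial.eval u (Lagrange.nodal S v) ≠ 0 := Lagrange.eval_nodal_not_at_node hu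
  rw [Finset.prod_div_distrib, ← Lagrange.eval_nodal, ← Lagrange.eval_nodal, heval, add_div,
    div_self hne, mul_div_cancel_left₀ _ hne]
  refine congrArg (1 + ·) (Finset.sum_congr rfl fun i hi => ?_)
  rw [Polynomial.eval_sub, Lagrange.eval_nodal_at_node hi, sub_zero, Lagrange.eval_nodal,
    ← Finset.mul_prod_erase S _ hi, Lagrange.nodalWeight, Finset.prod_div_distrib,
    Finset.prod_inv_distrib]
  ring

theorem one_add_sum_eq_prod_sub_div_sub (hz : Set.InjOn z S) (hzv : ∀ i ∈ S, ∀ j ∈ S, z i ≠ v j)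
    (hzero : ∀ i ∈ S, 1 + ∑ j ∈ S, w j * (z i - v j)⁻¹ = 0) (hu : ∀ i ∈ S, u ≠ v i) :
    1 + ∑ j ∈ S, w j * (u - v j)⁻¹ = ∏ i ∈ S, (u - z i) / (u - v i) := by
  classical
  by_cases huz : ∃ i ∈ S, u = z i
  · obtain ⟨i, hi, rfl⟩ := huz
    rw [hzero i hi, Finset.prod_eq_zero hi (by rw [sub_self, zero_div])]
  push Not at huz
  -- Expand the reciprocal product, whose poles are the `z i`, in partial fractions.
  set c : ι → K := fun i => (z i - v i) * ∏ j ∈ S.erase i, (z i - v j) / (z i - z j)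
  have hrecip {x : K} (hx : ∀ i ∈ S, x ≠ z i) :
      ∏ i ∈ S, (x - v i) / (x - z i) = 1 + ∑ i ∈ S, c i * (x - z i)⁻¹ :=
    prod_sub_div_sub_eq_one_add_sum hz hx
  have hc : ∀ j ∈ S, ∑ i ∈ S, c i * (z i - v j)⁻¹ = 1 := fun j hj => by
    have h := hrecip fun i hi => (hzv i hi j hj).symm
    rw [Finset.prod_eq_zero hj (by rw [sub_self, zero_div])] at h
    simp_rw [← neg_sub (v j), inv_neg, mul_neg, Finset.sum_neg_distrib]
    linear_combination h
  have hmul : (1 + ∑ j ∈ S, w j * (u - v j)⁻¹) * ∏ i ∈ S, (u - v i) / (u - z i) = 1 :=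
    calc _ = (1 + ∑ j ∈ S, w j * (u - v j)⁻¹) -
          ∑ i ∈ S, ∑ j ∈ S, w j * (u - v j)⁻¹ * (c i * (z i - v j)⁻¹) := by
          rw [hrecip huz, mul_add, mul_one, Finset.mul_sum, sub_eq_add_neg,
            ← Finset.sum_neg_distrib]
          refine congrArg _ (Finset.sum_congr rfl fun i hi => ?_)
          rw [mul_left_comm, one_add_sum_mul_inv_sub hu (hzv i hi) (huz i hi) (hzero i hi),
            mul_neg, Finset.mul_sum]
          exact congrArg _ (Finset.sum_congr rfl fun j _ => mul_left_comm _ _ _)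
      _ = 1 := by
          rw [Finset.sum_comm, add_sub_assoc, ← Finset.sum_sub_distrib,
            Finset.sum_eq_zero, add_zero]
          intro j hj
          rw [← Finset.mul_sum, hc j hj, mul_one, sub_self]
  rw [eq_inv_of_mul_eq_one_left hmul, ← Finset.prod_inv_distrib]
  simp only [inv_div]

end PartialFractions

section Interlacing

variable {a b : ℝ} {S : Finset ℝ} {α w : ℝ → ℝ}

/-- The points `α s` interlace with the points `s ∈ S` inside `[a, ∞)`: between `a` and the least
point of `S`, and between any two consecutive points of `S`, lies exactly one of them. Equality is
allowed throughout. The `α s` will be the zeros, and the `s` the poles, of a rational function. -/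
structure Interlaces (a : ℝ) (S : Finset ℝ) (α : ℝ → ℝ) : Prop where
  left_le : ∀ s ∈ S, a ≤ α s
  le_self : ∀ s ∈ S, α s ≤ s
  le_of_lt : ∀ r ∈ S, ∀ s ∈ S, r < s → r ≤ α s

/-- Lebesgue measure on the intervals `(α s, s]`, `s ∈ S`, counted with multiplicity. -/
noncomputable def intervalMeasure (S : Finset ℝ) (α : ℝ → ℝ) : Measure ℝ :=
  ∑ s ∈ S, volume.restrict (Set.Ioc (α s) s)

/-- The measure with an atom of mass `w s` at each `s ∈ S`; negative weights count as zero. -/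
noncomputable def atomicMeasure (S : Finset ℝ) (w : ℝ → ℝ) : Measure ℝ :=
  ∑ s ∈ S, ENNReal.ofReal (w s) • Measure.dirac s

instance : IsFiniteMeasure (intervalMeasure S α) := by
  unfold intervalMeasure
  infer_instance

instance : IsFiniteMeasure (atomicMeasure S w) := by
  have (s : ℝ) : IsFiniteMeasure (ENNReal.ofReal (w s) • Measure.dirac s) :=
    Measure.smul_finite _ ENNReal.ofReal_ne_top
  unfold atomicMeasure
  infer_instance

theorem ae_mem_atomicMeasure : ∀ᵐ t ∂atomicMeasure S w, t ∈ S := by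
  rw [atomicMeasure, ae_finsetSum_measure_iff]
  exact fun s hs => Measure.ae_smul_measure ((ae_dirac_iff S.measurableSet).2 hs) _

theorem integral_atomicMeasure {E : Type*} [NormedAddCommGroup E] [NormedSpace ℝ E]
    [CompleteSpace E] (hw : ∀ s ∈ S, 0 ≤ w s) (f : ℝ → E) :
    ∫ t, f t ∂atomicMeasure S w = ∑ s ∈ S, w s • f s := by
  have hint : ∀ s ∈ S, Integrable f (ENNReal.ofReal (w s) • Measure.dirac s) := fun s _ =>
    (integrable_dirac enorm_lt_top).smul_measure ENNReal.ofReal_ne_top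
  rw [atomicMeasure, integral_finsetSum_measure hint]
  refine Finset.sum_congr rfl fun s hs => ?_
  rw [integral_smul_measure, integral_dirac, ENNReal.toReal_ofReal (hw s hs)]

theorem hasDerivAt_exp_integral_inv_sub_mul_sub {α β x : ℝ} {u : ℂ}
    (hu : u ∉ Complex.ofReal '' Set.Icc α β) (hx : x ∈ Set.Icc α β) :
    HasDerivAt (fun x : ℝ => Complex.exp (∫ t in α..x, (u - (t : ℂ))⁻¹) * (u - x)) 0 x := by
  have hint : HasDerivAt (fun x : ℝ => ∫ t in α..x, (u - (t : ℂ))⁻¹) (u - x)⁻¹ x := by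
    refine intervalIntegral.integral_hasDerivAt_right ?_ ?_ ?_
    · refine ContinuousOn.intervalIntegrable_of_Icc hx.1 ?_
      exact (continuousOn_inv_sub_ofReal hu).mono (Set.Icc_subset_Icc_right hx.2)
    · exact (by fun_prop : Measurable fun t : ℝ => (u - (t : ℂ))⁻¹).stronglyMeasurable
        |>.stronglyMeasurableAtFilter
    · exact ContinuousAt.inv₀ (by fun_prop) (sub_ofReal_ne_zero hu hx)
  have hsub : HasDerivAt (fun x : ℝ => u - (x : ℂ)) (-1) x :=
    Complex.ofRealCLM.hasDerivAt.const_sub u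
  convert! hint.cexp.mul hsub using 1
  rw [mul_assoc, inv_mul_cancel₀ (sub_ofReal_ne_zero hu hx)]
  ring

theorem exp_setIntegral_Ioc_inv_sub {α β : ℝ} (hαβ : α ≤ β) {u : ℂ}
    (hu : u ∉ Complex.ofReal '' Set.Icc α β) :
    Complex.exp (∫ t in Set.Ioc α β, (u - (t : ℂ))⁻¹) = (u - α) / (u - β) := by
  have hderiv := fun x hx => hasDerivAt_exp_integral_inv_sub_mul_sub hu (x := x) hx
  have hconst := constant_of_has_deriv_right_zero
    (fun x hx => (hderiv x hx).continuousAt.continuousWithinAt)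
    (fun x hx => (hderiv x ⟨hx.1, hx.2.le⟩).hasDerivWithinAt) β (Set.right_mem_Icc.2 hαβ)
  rw [intervalIntegral.integral_same, Complex.exp_zero, one_mul,
    intervalIntegral.integral_of_le hαβ] at hconst
  rw [eq_div_iff (sub_ofReal_ne_zero hu (Set.right_mem_Icc.2 hαβ)), hconst]

namespace Interlaces

theorem mem_Icc (h : Interlaces a S α) (hS : ∀ s ∈ S, s ≤ b) {s : ℝ} (hs : s ∈ S) :
    s ∈ Set.Icc a b :=
  ⟨(h.left_le s hs).trans (h.le_self s hs), hS s hs⟩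

theorem Ioc_subset_Icc (h : Interlaces a S α) (hS : ∀ s ∈ S, s ≤ b) {s : ℝ} (hs : s ∈ S) :
    Set.Ioc (α s) s ⊆ Set.Icc a b :=
  Set.Ioc_subset_Icc_self.trans (Set.Icc_subset_Icc (h.left_le s hs) (hS s hs))

theorem pairwise_disjoint_Ioc (h : Interlaces a S α) :
    (S : Set ℝ).Pairwise (Function.onFun Disjoint fun s => Set.Ioc (α s) s) := by
  have hlt : ∀ r ∈ S, ∀ s ∈ S, r < s → Disjoint (Set.Ioc (α r) r) (Set.Ioc (α s) s) :=
    fun r hr s hs hrs => Set.Ioc_disjoint_Ioc_of_le (h.le_of_lt r hr s hs hrs)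
  intro r hr s hs hrs
  rcases hrs.lt_or_gt with hrs | hsr
  exacts [hlt r hr s hs hrs, (hlt s hs r hr hsr).symm]

theorem sum_restrict_Ioc (h : Interlaces a S α) (ρ : Measure ℝ) :
    ∑ s ∈ S, ρ.restrict (Set.Ioc (α s) s) = ρ.restrict (⋃ s ∈ S, Set.Ioc (α s) s) := by
  rw [Measure.restrict_biUnion_finset h.pairwise_disjoint_Ioc fun _ => measurableSet_Ioc]
  exact (Measure.sum_coe_finset S fun s => ρ.restrict (Set.Ioc (α s) s)).symm

theorem intervalMeasure_le_volume (h : Interlaces a S α) : intervalMeasure S α ≤ volume :=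
  (h.sum_restrict_Ioc volume).trans_le Measure.restrict_le_self

theorem ae_mem_Icc_intervalMeasure (h : Interlaces a S α) (hS : ∀ s ∈ S, s ≤ b) :
    ∀ᵐ t ∂intervalMeasure S α, t ∈ Set.Icc a b := by
  rw [intervalMeasure, ae_finsetSum_measure_iff]
  exact fun s hs => (ae_restrict_mem measurableSet_Ioc).mono fun t ht => h.Ioc_subset_Icc hS hs ht

theorem exp_cauchyTransform_intervalMeasure (h : Interlaces a S α) (hS : ∀ s ∈ S, s ≤ b) {u : ℂ}
    (hu : u ∉ Complex.ofReal '' Set.Icc a b) :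
    Complex.exp (cauchyTransform (intervalMeasure S α) u) = ∏ s ∈ S, (u - α s) / (u - s) := by
  have hsub : ∀ s ∈ S, Set.Icc (α s) s ⊆ Set.Icc a b := fun s hs =>
    Set.Icc_subset_Icc (h.left_le s hs) (hS s hs)
  have hint : ∀ s ∈ S, IntegrableOn (fun t : ℝ => (u - (t : ℂ))⁻¹) (Set.Ioc (α s) s) :=
    fun s hs => ((continuousOn_inv_sub_ofReal hu).mono (hsub s hs)).integrableOn_Icc.mono_set
      Set.Ioc_subset_Icc_self
  rw [cauchyTransform, intervalMeasure, integral_finsetSum_measure hint, Complex.exp_sum]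
  exact Finset.prod_congr rfl fun s hs => exp_setIntegral_Ioc_inv_sub (h.le_self s hs)
    fun hm => hu (Set.image_mono (hsub s hs) hm)

theorem weight_nonneg (h : Interlaces a S α) {s : ℝ} (hs : s ∈ S) :
    0 ≤ (s - α s) * ∏ r ∈ S.erase s, (s - α r) / (s - r) := by
  refine mul_nonneg (sub_nonneg.2 (h.le_self s hs)) (Finset.prod_nonneg fun r hr => ?_)
  obtain ⟨hrs, hrS⟩ := Finset.mem_erase.1 hr
  rcases hrs.lt_or_gt with hrs | hsr
  · exact div_nonneg (sub_nonneg.2 ((h.le_self r hrS).trans hrs.le)) (sub_nonneg.2 hrs.le)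
  · exact div_nonneg_of_nonpos (sub_nonpos.2 (h.le_of_lt s hs r hrS hsr)) (sub_nonpos.2 hsr.le)

theorem corrId_iff (h : Interlaces a S α) (hS : ∀ s ∈ S, s ≤ b) (hw : ∀ s ∈ S, 0 ≤ w s) :
    CorrId a b (intervalMeasure S α) (atomicMeasure S w) ↔
      ∀ u : ℂ, u ∉ Complex.ofReal '' Set.Icc a b →
        1 + ∑ s ∈ S, (w s : ℂ) * (u - s)⁻¹ = ∏ s ∈ S, (u - α s) / (u - s) := by
  refine forall₂_congr fun u hu => ?_
  rw [integral_atomicMeasure hw]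
  change _ = -1 + Complex.exp (cauchyTransform _ u) ↔ _
  rw [h.exp_cauchyTransform_intervalMeasure hS hu, eq_neg_add_iff_add_eq]
  simp only [Complex.real_smul]

theorem exists_corrId_atomicMeasure (h : Interlaces a S α) (hS : ∀ s ∈ S, s ≤ b) :
    ∃ w, CorrId a b (intervalMeasure S α) (atomicMeasure S w) := by
  refine ⟨_, (h.corrId_iff hS fun s => h.weight_nonneg).2 fun u hu => ?_⟩
  have hus : ∀ s ∈ S, u ≠ (s : ℂ) := fun s hs => sub_ne_zero.1
    (sub_ofReal_ne_zero hu (h.mem_Icc hS hs))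
  rw [prod_sub_div_sub_eq_one_add_sum Complex.ofReal_injective.injOn hus]
  push_cast
  rfl

end Interlaces

end Interlacing

section Zeros

variable {a b s : ℝ} {S : Finset ℝ} {w : ℝ → ℝ}

theorem continuousAt_sum_mul_inv_sub (hs : s ∉ S) :
    ContinuousAt (fun u => ∑ r ∈ S, w r * (u - r)⁻¹) s :=
  tendsto_finsetSum _ fun r hr =>
    (((continuousAt_id.sub continuousAt_const).inv₀
      (sub_ne_zero.2 (ne_of_mem_of_not_mem hr hs).symm)).const_mul (w r)).tendsto

theorem sum_mul_inv_sub_eq_add_sum_erase (hs : s ∈ S) :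
    (fun u => ∑ r ∈ S, w r * (u - r)⁻¹) =
      fun u => w s * (u - s)⁻¹ + ∑ r ∈ S.erase s, w r * (u - r)⁻¹ :=
  funext fun _ => (Finset.add_sum_erase S _ hs).symm

theorem tendsto_inv_sub_nhdsLT (s : ℝ) : Tendsto (fun u => (u - s)⁻¹) (𝓝[<] s) atBot :=
  tendsto_inv_nhdsLT_zero.comp <| tendsto_nhdsWithin_iff.2
    ⟨tendsto_sub_nhds_zero_iff.2 nhdsWithin_le_nhds,
      eventually_mem_nhdsWithin.mono fun _ hu => Set.mem_Iio.2 (sub_neg.2 hu)⟩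

theorem tendsto_sum_mul_inv_sub_nhdsLT (hs : s ∈ S) (hw : 0 < w s) :
    Tendsto (fun u => ∑ r ∈ S, w r * (u - r)⁻¹) (𝓝[<] s) atBot := by
  rw [sum_mul_inv_sub_eq_add_sum_erase hs]
  exact ((tendsto_inv_sub_nhdsLT s).const_mul_atBot hw).atBot_add
    ((continuousAt_sum_mul_inv_sub (S.notMem_erase s)).tendsto.mono_left nhdsWithin_le_nhds)

theorem tendsto_inv_sub_nhdsGT (s : ℝ) : Tendsto (fun u => (u - s)⁻¹) (𝓝[>] s) atTop :=
  tendsto_inv_nhdsGT_zero.comp <| tendsto_nhdsWithin_iff.2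
    ⟨tendsto_sub_nhds_zero_iff.2 nhdsWithin_le_nhds,
      eventually_mem_nhdsWithin.mono fun _ hu => Set.mem_Ioi.2 (sub_pos.2 hu)⟩

theorem tendsto_sum_mul_inv_sub_nhdsGT (hs : s ∈ S) (hw : 0 < w s) :
    Tendsto (fun u => ∑ r ∈ S, w r * (u - r)⁻¹) (𝓝[>] s) atTop := by
  rw [sum_mul_inv_sub_eq_add_sum_erase hs]
  exact ((tendsto_inv_sub_nhdsGT s).const_mul_atTop hw).atTop_add
    ((continuousAt_sum_mul_inv_sub (S.notMem_erase s)).tendsto.mono_left nhdsWithin_le_nhds)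

theorem exists_lt_sum_mul_inv_sub_pos (hw : ∀ r ∈ S, 0 < w r)
    (hpos : ∀ u < a, 0 < 1 + ∑ r ∈ S, w r * (u - r)⁻¹) (s : ℝ) :
    ∃ p < s, 0 < 1 + ∑ r ∈ S, w r * (p - r)⁻¹ ∧ ∀ r ∈ S, r < s → r < p := by
  rcases (S.filter (· < s)).eq_empty_or_nonempty with hempty | hne
  · refine ⟨min a s - 1, by linarith [min_le_right a s],
      hpos _ (by linarith [min_le_left a s]), fun r hr hrs => ?_⟩
    exact absurd hrs (Finset.filter_eq_empty_iff.1 hempty hr)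
  · obtain ⟨hmS, hms⟩ := Finset.mem_filter.1 (Finset.max'_mem _ hne)
    have hlarge := (tendsto_sum_mul_inv_sub_nhdsGT hmS (hw _ hmS)).eventually_gt_atTop (-1)
    obtain ⟨p, hp, hmp, hps⟩ := (hlarge.and (Ioo_mem_nhdsGT hms)).exists
    refine ⟨p, hps, by linarith, fun r hr hrs => ?_⟩
    exact (Finset.le_max' _ r (Finset.mem_filter.2 ⟨hr, hrs⟩)).trans_lt hmp

theorem exists_sum_mul_inv_sub_eq_zero (hw : ∀ r ∈ S, 0 < w r)
    (hpos : ∀ u < a, 0 < 1 + ∑ r ∈ S, w r * (u - r)⁻¹) (hs : s ∈ S) :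
    ∃ z, a ≤ z ∧ z < s ∧ (∀ r ∈ S, r < s → r < z) ∧ 1 + ∑ r ∈ S, w r * (z - r)⁻¹ = 0 := by
  obtain ⟨p, hps, hp, hrp⟩ := exists_lt_sum_mul_inv_sub_pos hw hpos s
  have hsmall := (tendsto_sum_mul_inv_sub_nhdsLT hs (hw s hs)).eventually_lt_atBot (-1)
  obtain ⟨q, hq, hpq, hqs⟩ := (hsmall.and (Ioo_mem_nhdsLT hps)).exists
  have hcont : ContinuousOn (fun u => ∑ r ∈ S, w r * (u - r)⁻¹) (Set.Icc p q) := fun u hu =>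
    (continuousAt_sum_mul_inv_sub fun huS =>
      (hrp u huS (hu.2.trans_lt hqs)).not_ge hu.1).continuousWithinAt
  obtain ⟨z, hz, hzero⟩ := intermediate_value_Icc' hpq.le hcont
    (show (-1 : ℝ) ∈ Set.Icc _ _ from ⟨hq.le, by linarith⟩)
  have hF : 1 + ∑ r ∈ S, w r * (z - r)⁻¹ = 0 :=
    (congrArg (1 + ·) hzero).trans (add_neg_cancel 1)
  exact ⟨z, not_lt.1 fun hza => (hpos z hza).ne' hF, hz.2.trans_lt hqs,
    fun r hr hrs => (hrp r hr hrs).trans_le hz.1, hF⟩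

theorem exists_interlaces_corrId_atomicMeasure (hS : ∀ s ∈ S, s ≤ b) (hw : ∀ s ∈ S, 0 < w s)
    (hpos : ∀ u < a, 0 < 1 + ∑ s ∈ S, w s * (u - s)⁻¹) :
    ∃ α, Interlaces a S α ∧ CorrId a b (intervalMeasure S α) (atomicMeasure S w) := by
  choose! α hα_ge hα_lt hlt_α hzero using fun s hs =>
    exists_sum_mul_inv_sub_eq_zero hw hpos (s := s) hs
  have hα : Interlaces a S α :=
    ⟨hα_ge, fun s hs => (hα_lt s hs).le, fun r hr s hs hrs => (hlt_α s hs r hr hrs).le⟩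
  have hmono : StrictMonoOn α S := fun r hr s hs hrs => (hα_lt r hr).trans (hlt_α s hs r hr hrs)
  have hne : ∀ s ∈ S, ∀ r ∈ S, (α s : ℂ) ≠ r := fun s hs r hr heq => by
    obtain rfl : α s = r := Complex.ofReal_injective heq
    exact (hlt_α s hs _ hr (hα_lt s hs)).false
  refine ⟨α, hα, (hα.corrId_iff hS fun s hs => (hw s hs).le).2 fun u hu => ?_⟩
  refine one_add_sum_eq_prod_sub_div_sub (Complex.ofReal_injective.comp_injOn hmono.injOn) hne
    (fun s hs => ?_) fun s hs => sub_ne_zero.1 (sub_ofReal_ne_zero hu (hα.mem_Icc hS hs))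
  exact_mod_cast congrArg Complex.ofReal (hzero s hs)

end Zeros

section Grid

variable {a b h s : ℝ} {P Q : Measure ℝ}

/-- The points `b - k * h`, `k : ℕ`, that lie in `[a, b]`. The half-open cells `(s - h, s]` ending
at these points are disjoint and cover `[a, b]`, the leftmost one possibly sticking out. -/
noncomputable def grid (a b h : ℝ) : Finset ℝ :=
  (Finset.range (⌊(b - a) / h⌋₊ + 1)).image fun k : ℕ => b - k * h

theorem interlaces_grid (hab : a ≤ b) (hh : 0 < h) :
    Interlaces (a - h) (grid a b h) fun s => s - h where
  left_le s hs := by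
    obtain ⟨k, hk, rfl⟩ := Finset.mem_image.1 hs
    have hkh : (k : ℝ) ≤ (b - a) / h :=
      (Nat.le_floor_iff (div_nonneg (sub_nonneg.2 hab) hh.le)).1 (Finset.mem_range_succ_iff.1 hk)
    linarith [(le_div_iff₀ hh).1 hkh]
  le_self s _ := sub_le_self s hh.le
  le_of_lt r hr s hs hrs := by
    obtain ⟨k, -, rfl⟩ := Finset.mem_image.1 hr
    obtain ⟨l, -, rfl⟩ := Finset.mem_image.1 hs
    have hlk : (l : ℝ) < k := lt_of_mul_lt_mul_right (by linarith) hh.le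
    have hlk' : (l : ℝ) + 1 ≤ k := by exact_mod_cast hlk
    linarith [mul_le_mul_of_nonneg_right hlk' hh.le]

theorem mem_Icc_of_mem_grid (hab : a ≤ b) (hh : 0 < h) (hs : s ∈ grid a b h) :
    s ∈ Set.Icc a b := by
  refine ⟨(sub_le_sub_iff_right h).1 ((interlaces_grid hab hh).left_le s hs), ?_⟩
  obtain ⟨k, -, rfl⟩ := Finset.mem_image.1 hs
  exact sub_le_self b (by positivity)

theorem Icc_subset_biUnion_grid (hh : 0 < h) :
    Set.Icc a b ⊆ ⋃ s ∈ grid a b h, Set.Ioc (s - h) s := by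
  intro t ht
  have hbt : 0 ≤ (b - t) / h := div_nonneg (sub_nonneg.2 ht.2) hh.le
  refine Set.mem_biUnion (Finset.mem_image_of_mem _ (Finset.mem_range_succ_iff.2
    (Nat.floor_mono (div_le_div_of_nonneg_right (sub_le_sub_left ht.1 b) hh.le)))) ⟨?_, ?_⟩
  · linarith [(div_lt_iff₀ hh).1 (Nat.lt_floor_add_one ((b - t) / h))]
  · linarith [(le_div_iff₀ hh).1 (Nat.floor_le hbt)]

theorem sum_restrict_Ioc_grid (hab : a ≤ b) (hh : 0 < h) (hQ : ∀ᵐ t ∂Q, t ∈ Set.Icc a b) :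
    ∑ s ∈ grid a b h, Q.restrict (Set.Ioc (s - h) s) = Q := by
  rw [(interlaces_grid hab hh).sum_restrict_Ioc Q]
  exact Measure.restrict_eq_self_of_ae_mem (hQ.mono fun _ ht => Icc_subset_biUnion_grid hh ht)

theorem sum_measure_Ioc_grid (hab : a ≤ b) (hh : 0 < h) (hQ : ∀ᵐ t ∂Q, t ∈ Set.Icc a b) :
    ∑ s ∈ grid a b h, Q (Set.Ioc (s - h) s) = Q Set.univ := by
  conv_rhs => rw [← sum_restrict_Ioc_grid hab hh hQ]
  simp only [Measure.finsetSum_apply, Measure.restrict_apply_univ]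

/-- The measure `P` arises from `Q` by redistributing its mass within each cell of the grid, so that
`P` approximates `Q` at scale `h`. The mass put into `(s - h, s]` may also be placed at `s - h`. -/
def IsRedistribution (a b h : ℝ) (Q P : Measure ℝ) : Prop :=
  ∃ ρ : ℝ → Measure ℝ, P = ∑ s ∈ grid a b h, ρ s ∧
    (∀ s ∈ grid a b h, ∀ᵐ t ∂ρ s, t ∈ Set.Icc (s - h) s) ∧
    ∀ s ∈ grid a b h, ρ s Set.univ = Q (Set.Ioc (s - h) s)

theorem IsRedistribution.memM (h_redist : IsRedistribution a b h Q P) (hh : 0 < h)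
    (hQ : MemM a b Q) (hP : ∀ᵐ t ∂P, t ∈ Set.Icc a b) : MemM a b P := by
  obtain ⟨ρ, rfl, -, hmass⟩ := h_redist
  refine memM_iff_ae_mem_Icc.2 ⟨⟨?_⟩, hP⟩
  rw [Measure.finsetSum_apply, Finset.sum_congr rfl hmass,
    sum_measure_Ioc_grid hQ.left_le_right hh hQ.ae_mem_Icc]
  exact hQ.1.measure_univ

theorem dist_integral_le_of_measure_univ_eq {X : Type*} [PseudoMetricSpace X] [MeasurableSpace X]
    {ρ σ : Measure X} [IsFiniteMeasure ρ] [IsFiniteMeasure σ] {L : ℝ≥0} {f : X → ℝ} {x : X}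
    (hf : LipschitzWith L f) (hfρ : Integrable f ρ) (hfσ : Integrable f σ)
    (hρ : ∀ᵐ y ∂ρ, dist y x ≤ h) (hσ : ∀ᵐ y ∂σ, dist y x ≤ h)
    (hmass : ρ Set.univ = σ Set.univ) :
    dist (∫ y, f y ∂ρ) (∫ y, f y ∂σ) ≤ 2 * L * h * σ.real Set.univ := by
  have hle {τ : Measure X} [IsFiniteMeasure τ] (hfτ : Integrable f τ)
      (hτ : ∀ᵐ y ∂τ, dist y x ≤ h) :
      dist (∫ y, f y ∂τ) (∫ _, f x ∂τ) ≤ L * h * τ.real Set.univ :=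
    norm_integral_sub_integral_le hfτ (integrable_const _) <| hτ.mono fun y hy =>
      (hf.dist_le_mul y x).trans (by gcongr)
  have hρx := hle hfρ hρ
  rw [integral_const, measureReal_def, hmass, ← measureReal_def, ← integral_const] at hρx
  linarith [dist_triangle_right (∫ y, f y ∂ρ) (∫ y, f y ∂σ) (∫ _, f x ∂σ), hle hfσ hσ]

theorem IsRedistribution.dist_integral_le (h_redist : IsRedistribution a b h Q P) (hh : 0 < h)
    (hQ : MemM a b Q) {L : ℝ≥0} {f : ℝ → ℝ} (hf : LipschitzWith L f) (hfP : Integrable f P)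
    (hfQ : Integrable f Q) : dist (∫ t, f t ∂P) (∫ t, f t ∂Q) ≤ 2 * L * h := by
  obtain ⟨ρ, rfl, hmem, hmass⟩ := h_redist
  rw [integrable_finsetSum_measure] at hfP
  have := hQ.1
  have hsum := sum_restrict_Ioc_grid hQ.left_le_right hh hQ.ae_mem_Icc
  have hdist {s t : ℝ} (ht : t ∈ Set.Icc (s - h) s) : dist t s ≤ h := by
    rw [dist_comm, Real.dist_eq, abs_of_nonneg (sub_nonneg.2 ht.2)]
    linarith [ht.1]
  have hcell : ∀ s ∈ grid a b h,
      dist (∫ t, f t ∂ρ s) (∫ t in Set.Ioc (s - h) s, f t ∂Q) ≤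
        2 * L * h * Q.real (Set.Ioc (s - h) s) := fun s hs => by
    have : IsFiniteMeasure (ρ s) := ⟨(hmass s hs).trans_lt (measure_lt_top _ _)⟩
    simpa only [measureReal_restrict_apply_univ] using
      dist_integral_le_of_measure_univ_eq hf (hfP s hs) hfQ.integrableOn
        ((hmem s hs).mono fun _ => hdist)
        ((ae_restrict_mem measurableSet_Ioc).mono fun _ ht => hdist (Set.Ioc_subset_Icc_self ht))
        (by rw [hmass s hs, Measure.restrict_apply_univ])
  have hone : ∑ s ∈ grid a b h, Q.real (Set.Ioc (s - h) s) = 1 := by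
    simp only [measureReal_def]
    rw [← ENNReal.toReal_sum fun s _ => measure_ne_top Q _,
      sum_measure_Ioc_grid hQ.left_le_right hh hQ.ae_mem_Icc, measure_univ, ENNReal.toReal_one]
  calc dist (∫ t, f t ∂∑ s ∈ grid a b h, ρ s) (∫ t, f t ∂Q)
      = dist (∑ s ∈ grid a b h, ∫ t, f t ∂ρ s)
          (∑ s ∈ grid a b h, ∫ t in Set.Ioc (s - h) s, f t ∂Q) := by
        rw [← integral_finsetSum_measure hfP,
          ← integral_finsetSum_measure fun s _ => hfQ.integrableOn, hsum]
    _ ≤ ∑ s ∈ grid a b h, 2 * L * h * Q.real (Set.Ioc (s - h) s) :=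
        dist_sum_sum_le_of_le _ hcell
    _ = 2 * L * h := by rw [← Finset.mul_sum, hone, mul_one]

theorem tendsto_of_isRedistribution {ι : Type*} {F : Filter ι} [F.IsCountablyGenerated]
    {h : ι → ℝ} {P : ι → Measure ℝ} (hh : ∀ i, 0 < h i) (hlim : Tendsto h F (𝓝 0))
    (hQ : MemM a b Q) (hP : ∀ i, MemM a b (P i))
    (h_redist : ∀ i, IsRedistribution a b (h i) Q (P i)) :
    Tendsto (fun i => (hP i).toProbabilityMeasure) F (𝓝 hQ.toProbabilityMeasure) := by
  refine tendsto_iff_forall_lipschitz_integral_tendsto.2 fun f ⟨C, hC⟩ ⟨L, hL⟩ => ?_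
  have hint (R : ProbabilityMeasure ℝ) : Integrable f (R : Measure ℝ) :=
    (BoundedContinuousFunction.mkOfBound ⟨f, hL.continuous⟩ C hC).integrable _
  have hdist := fun i => (h_redist i).dist_integral_le (hh i) hQ hL
    (hint (hP i).toProbabilityMeasure) (hint hQ.toProbabilityMeasure)
  exact tendsto_iff_dist_tendsto_zero.2 (squeeze_zero (fun _ => dist_nonneg) hdist
    (by simpa only [mul_zero] using hlim.const_mul (2 * (L : ℝ))))

end Grid

section Discretization

variable {a b h : ℝ} {ψ μ : Measure ℝ}

theorem measureReal_Ioc_sub_self_le (hle : ψ ≤ volume) (hh : 0 ≤ h) (s : ℝ) :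
    ψ.real (Set.Ioc (s - h) s) ≤ h := by
  refine ENNReal.toReal_le_of_le_ofReal hh ((hle _).trans_eq ?_)
  rw [Real.volume_Ioc, sub_sub_cancel]

theorem interlaces_sub_measureReal_grid (hab : a ≤ b) (hh : 0 < h)
    (hle : ψ ≤ volume) (hψ : ∀ᵐ t ∂ψ, t ∈ Set.Icc a b) :
    Interlaces a (grid a b h) fun s => s - ψ.real (Set.Ioc (s - h) s) where
  left_le s hs := by
    have has : 0 ≤ s - a := sub_nonneg.2 (mem_Icc_of_mem_grid hab hh hs).1
    refine le_sub_comm.1 (ENNReal.toReal_le_of_le_ofReal has ?_)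
    calc ψ (Set.Ioc (s - h) s) ≤ ψ (Set.Icc a s) :=
          measure_mono_ae (hψ.mono fun t ht hts => ⟨ht.1, hts.2⟩)
      _ ≤ volume (Set.Icc a s) := hle _
      _ = ENNReal.ofReal (s - a) := Real.volume_Icc
  le_self s _ := sub_le_self s measureReal_nonneg
  le_of_lt r hr s hs hrs := ((interlaces_grid hab hh).le_of_lt r hr s hs hrs).trans
    (sub_le_sub_left (measureReal_Ioc_sub_self_le hle hh.le s) s)

theorem isRedistribution_intervalMeasure [IsFiniteMeasure ψ] (hh : 0 ≤ h) (hle : ψ ≤ volume) :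
    IsRedistribution a b h ψ
      (intervalMeasure (grid a b h) fun s => s - ψ.real (Set.Ioc (s - h) s)) := by
  refine ⟨_, rfl, fun s _ => ?_, fun s _ => ?_⟩
  · exact (ae_restrict_mem measurableSet_Ioc).mono fun _ ht =>
      ⟨(sub_le_sub_left (measureReal_Ioc_sub_self_le hle hh s) s).trans ht.1.le, ht.2⟩
  · rw [Measure.restrict_apply_univ, Real.volume_Ioc, sub_sub_cancel, ofReal_measureReal]

theorem isRedistribution_atomicMeasure [IsFiniteMeasure μ] (hh : 0 ≤ h) :
    IsRedistribution a b h μ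
      (atomicMeasure (grid a b h) fun s => μ.real (Set.Ioc (s - h) s)) := by
  refine ⟨_, rfl, fun s _ => ?_, fun s _ => ?_⟩
  · exact Measure.ae_smul_measure
      ((ae_dirac_iff measurableSet_Icc).2 (Set.right_mem_Icc.2 (sub_le_self s hh))) _
  · rw [Measure.smul_apply, Measure.dirac_apply_of_mem (Set.mem_univ s), smul_eq_mul, mul_one,
      ofReal_measureReal]

theorem integral_le_integral_atomicMeasure_grid [IsFiniteMeasure μ] (hab : a ≤ b) (hh : 0 < h)
    (hμ : ∀ᵐ t ∂μ, t ∈ Set.Icc a b) {f : ℝ → ℝ} (hf : MonotoneOn f (Set.Icc a b))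
    (hint : Integrable f μ) :
    ∫ t, f t ∂μ ≤ ∫ t, f t ∂atomicMeasure (grid a b h) fun s => μ.real (Set.Ioc (s - h) s) := by
  rw [integral_atomicMeasure fun _ _ => measureReal_nonneg]
  conv_lhs => rw [← sum_restrict_Ioc_grid hab hh hμ]
  rw [integral_finsetSum_measure fun _ _ => hint.integrableOn]
  refine Finset.sum_le_sum fun s hs => ?_
  rw [← setIntegral_const]
  refine integral_mono_ae hint.integrableOn (integrable_const _) ?_
  filter_upwards [ae_restrict_of_ae hμ, ae_restrict_mem measurableSet_Ioc] with t ht hts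
  exact hf ht (mem_Icc_of_mem_grid hab hh hs) hts.2

theorem atomicMeasure_filter_pos (S : Finset ℝ) (w : ℝ → ℝ) :
    atomicMeasure (S.filter fun s => 0 < w s) w = atomicMeasure S w :=
  Finset.sum_filter_of_ne fun s _ hne => by
    contrapose! hne
    rw [ENNReal.ofReal_of_nonpos hne, zero_smul]

theorem exists_interlaces_corrId_atomicMeasure_grid [IsFiniteMeasure μ] (hab : a ≤ b) (hh : 0 < h)
    (hμ : ∀ᵐ t ∂μ, t ∈ Set.Icc a b) (hpos : ∀ u < a, -1 < ∫ t, (u - t)⁻¹ ∂μ) :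
    ∃ S α, (∀ s ∈ S, s ≤ b) ∧ Interlaces a S α ∧ CorrId a b (intervalMeasure S α)
      (atomicMeasure (grid a b h) fun s => μ.real (Set.Ioc (s - h) s)) := by
  set w : ℝ → ℝ := fun s => μ.real (Set.Ioc (s - h) s)
  set S := (grid a b h).filter fun s => 0 < w s with hS
  have hSb : ∀ s ∈ S, s ≤ b := fun s hs => (mem_Icc_of_mem_grid hab hh (Finset.mem_filter.1 hs).1).2
  have hw : ∀ s ∈ S, 0 < w s := fun s hs => (Finset.mem_filter.1 hs).2
  obtain ⟨α, hα, hcorr⟩ := exists_interlaces_corrId_atomicMeasure (a := a) hSb hw fun u hu => by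
    have hsub : ∀ t ∈ Set.Icc a b, u - t < 0 := fun t ht => sub_neg.2 (hu.trans_le ht.1)
    have hmono : MonotoneOn (fun t => (u - t)⁻¹) (Set.Icc a b) := fun s hs t ht hst =>
      (inv_le_inv_of_neg (hsub s hs) (hsub t ht)).2 (sub_le_sub_left hst u)
    have hint : Integrable (fun t => (u - t)⁻¹) μ := integrable_of_continuousOn_of_ae_mem
      isCompact_Icc hμ (ContinuousOn.inv₀ (by fun_prop) fun t ht => (hsub t ht).ne)
    have hle := integral_le_integral_atomicMeasure_grid hab hh hμ hmono hint
    rw [← atomicMeasure_filter_pos, integral_atomicMeasure fun s hs => (hw s hs).le] at hle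
    exact neg_lt_iff_pos_add'.1 ((hpos u hu).trans_le hle)
  rw [hS, atomicMeasure_filter_pos] at hcorr
  exact ⟨_, α, hSb, hα, hcorr⟩

theorem exists_isRedistribution_left_corrId (hh : 0 < h) (hψ : MemM a b ψ) (hle : ψ ≤ volume) :
    ∃ P Q, MemM a b P ∧ MemM a b Q ∧ IsRedistribution a b h ψ P ∧ CorrId a b P Q := by
  have := hψ.1
  have hab := hψ.left_le_right
  have hgrid : ∀ s ∈ grid a b h, s ∈ Set.Icc a b := fun s hs => mem_Icc_of_mem_grid hab hh hs
  have hα := interlaces_sub_measureReal_grid hab hh hle hψ.ae_mem_Icc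
  obtain ⟨w, hw⟩ := hα.exists_corrId_atomicMeasure fun s hs => (hgrid s hs).2
  have hredist := isRedistribution_intervalMeasure (a := a) (b := b) hh.le hle
  have hPmem := hα.ae_mem_Icc_intervalMeasure fun s hs => (hgrid s hs).2
  have hP := hredist.memM hh hψ hPmem
  exact ⟨_, _, hP, (hw.memM_iff_memM hPmem (ae_mem_atomicMeasure.mono hgrid)).1 hP, hredist, hw⟩

theorem MemMPrime.exists_isRedistribution_right_corrId (hh : 0 < h) (hμ : MemMPrime a b μ) :
    ∃ P Q, MemM a b P ∧ P ≤ volume ∧ MemM a b Q ∧ IsRedistribution a b h μ Q ∧ CorrId a b P Q := by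
  obtain ⟨hμ, hpos⟩ := hμ
  have := hμ.1
  have hab := hμ.left_le_right
  have hredist := isRedistribution_atomicMeasure (a := a) (b := b) (μ := μ) hh.le
  have hQmem := ae_mem_atomicMeasure (w := fun s => μ.real (Set.Ioc (s - h) s)) |>.mono
    fun s hs => mem_Icc_of_mem_grid hab hh hs
  have hQ := hredist.memM hh hμ hQmem
  obtain ⟨S, α, hSb, hα, hcorr⟩ :=
    exists_interlaces_corrId_atomicMeasure_grid hab hh hμ.ae_mem_Icc hpos
  exact ⟨_, _, (hcorr.memM_iff_memM (hα.ae_mem_Icc_intervalMeasure hSb) hQmem).2 hQ,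
    hα.intervalMeasure_le_volume, hQ, hredist, hcorr⟩

end Discretization

section Correspondence

variable {a b : ℝ} {ψ μ : Measure ℝ}

theorem exists_memM_corrId_of_le_volume (hψ : MemM a b ψ) (hle : ψ ≤ volume) :
    ∃ μ, MemM a b μ ∧ CorrId a b ψ μ := by
  have hpos (n : ℕ) : 0 < 1 / ((n : ℝ) + 1) := Nat.one_div_pos_of_nat
  choose P Q hP hQ hredist hcorr using fun n =>
    exists_isRedistribution_left_corrId (hpos n) hψ hle
  have hPψ := tendsto_of_isRedistribution hpos tendsto_one_div_add_atTop_nhds_zero_nat hψ hP hredist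
  obtain ⟨μ, hμ, φ, hφ, hQμ⟩ := MemM.exists_tendsto_subseq hQ
  exact ⟨μ, hμ, .of_tendsto (fun n => hP (φ n)) (fun n => hQ (φ n)) hψ hμ
    (hPψ.comp hφ.tendsto_atTop) hQμ fun n => hcorr (φ n)⟩

theorem MemMPrime.exists_memM_le_volume_corrId (hμ : MemMPrime a b μ) :
    ∃ ψ, MemM a b ψ ∧ ψ ≤ volume ∧ CorrId a b ψ μ := by
  have hpos (n : ℕ) : 0 < 1 / ((n : ℝ) + 1) := Nat.one_div_pos_of_nat
  choose P Q hP hle hQ hredist hcorr using fun n => hμ.exists_isRedistribution_right_corrId (hpos n)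
  have hQμ :=
    tendsto_of_isRedistribution hpos tendsto_one_div_add_atTop_nhds_zero_nat hμ.1 hQ hredist
  obtain ⟨ψ, hψ, φ, hφ, hPψ⟩ := MemM.exists_tendsto_subseq hP
  exact ⟨ψ, hψ, measure_le_of_tendsto (fun n => hle (φ n)) hPψ,
    .of_tendsto (fun n => hP (φ n)) (fun n => hQ (φ n)) hψ hμ.1 hPψ
      (hQμ.comp hφ.tendsto_atTop) fun n => hcorr (φ n)⟩

end Correspondence

/-- Theorem: bijection between `M̃[a,b]` and `M′[a,b]`.
The relation `R_ψ(u) = R_μ(u)` for all `u ∈ ℂ ∖ [a,b]` defines a bijective correspondence between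
`M̃[a,b]` and `M′[a,b] = {μ ∈ M[a,b] : R_μ(u) > -1 for u < a}`. -/
theorem stmt19 (a b : ℝ) (hab : a < b) :
    (∀ ψ : Measure ℝ, MemMTilde a b ψ →
      ∃ μ : Measure ℝ, MemMPrime a b μ ∧ CorrId a b ψ μ ∧
        ∀ μ' : Measure ℝ, MemMPrime a b μ' → CorrId a b ψ μ' → μ' = μ) ∧
    (∀ μ : Measure ℝ, MemMPrime a b μ →
      ∃ ψ : Measure ℝ, MemMTilde a b ψ ∧ CorrId a b ψ μ ∧
        ∀ ψ' : Measure ℝ, MemMTilde a b ψ' → CorrId a b ψ' μ → ψ' = ψ) := by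
  simp only [memMTilde_iff_le_volume]
  refine ⟨fun ψ ⟨hψ, hle⟩ => ?_, fun μ hμ => ?_⟩
  · obtain ⟨μ, hμ, h⟩ := exists_memM_corrId_of_le_volume hψ hle
    exact ⟨μ, h.memMPrime hμ, h, fun μ' hμ' h' => h.right_unique hμ hμ'.1 h'⟩
  · obtain ⟨ψ, hψ, hle, h⟩ := hμ.exists_memM_le_volume_corrId
    exact ⟨ψ, ⟨hψ, hle⟩, h, fun ψ' hψ' h' => h.left_unique hψ hψ'.1 h'⟩
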